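/- arXiv:1711.10127 — 2 statements merged into one kernel-verified Lean document; each statement's English description precedes it below -/
import Mathlib

section
/- Let d, M_α, M_β, M_ᾱ, M_β̄ ≥ 1 and let Ψ_α ∈ ℝ^{d×M_α}, Ψ_β ∈ ℝ^{d×M_β}, Ψ_ᾱ ∈ ℝ^{d×M_ᾱ}, Ψ_β̄ ∈ ℝ^{d×M_β̄} be matrices, a ∈ ℝ^{M_α}, ā ∈ ℝ^{M_ᾱ} vectors, and B ∈ ℝ^{M_β×M_β}, B̄ ∈ ℝ^{M_β̄×M_β̄} symmetric positive definite matrices. Define q = N(Ψ_α a, (I + Ψ_β B Ψ_βᵀ)⁻¹) and p = N(Ψ_ᾱ ā, (I + Ψ_β̄ B̄ Ψ_β̄ᵀ)⁻¹). Then KL(q ‖ p) = −(1/2)·tr( (K_β + K_{β,β̄} B̄ K_{β̄,β}) (B⁻¹ + K_β)⁻¹ ) + (1/2)·log det(I + K_β B) + (1/2)·aᵀ (K_α + K_{α,β̄} B̄ K_{β̄,α}) a − aᵀ (K_{α,ᾱ} + K_{α,β̄} B̄ K_{β̄,ᾱ}) ā + C, where C = (1/2)·( tr(K_β̄ B̄)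 − log det(I + K_β̄ B̄) + āᵀ (K_ᾱ + K_{ᾱ,β̄} B̄ K_{β̄,ᾱ}) ā ). -/
open Matrix MeasureTheory

/-- The multivariate Gaussian measure `N(μ, S)` on `ℝ^d`, defined by its
density with respect to the Lebesgue measure. -/
noncomputable def multiGaussian {d : ℕ} (μ : Fin d → ℝ)
    (S : Matrix (Fin d) (Fin d) ℝ) : Measure (Fin d → ℝ) :=
  volume.withDensity fun x =>
    ENNReal.ofReal ((Real.sqrt ((2 * Real.pi) ^ d * S.det))⁻¹ *
      Real.exp (-(1 / 2 : ℝ) * ((x - μ) ⬝ᵥ S⁻¹.mulVec (x - μ))))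

/-- The Kullback–Leibler divergence `∫ log (dq/dp) dq` between measures on
`ℝ^d` (for `q` absolutely continuous with respect to `p`). -/
noncomputable def klDiv {d : ℕ} (q p : Measure (Fin d → ℝ)) : ℝ :=
  ∫ x, Real.log (q.rnDeriv p x).toReal ∂q

open ProbabilityTheory

theorem integrable_pow_mul_gaussianPDFReal (n : ℕ) :
    Integrable fun t : ℝ => t ^ n * gaussianPDFReal 0 1 t := by
  have h : Integrable (fun t : ℝ => t ^ n) (gaussianReal 0 1) :=
    (integrable_norm_iff (by fun_prop)).1 <| by
      simpa using (memLp_id_gaussianReal (μ := 0) (v := 1) n).integrable_norm_pow'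
  rw [gaussianReal_of_var_ne_zero _ one_ne_zero,
    integrable_withDensity_iff_integrable_smul' (measurable_gaussianPDF _ _)
      (ae_of_all _ fun _ => gaussianPDF_lt_top)] at h
  simpa [mul_comm] using h

theorem integral_mul_gaussianPDFReal : ∫ t : ℝ, t * gaussianPDFReal 0 1 t = 0 := by
  have h := integral_id_gaussianReal (μ := 0) (v := 1)
  rw [integral_gaussianReal_eq_integral_smul one_ne_zero] at h
  simpa [mul_comm] using h

theorem integral_sq_mul_gaussianPDFReal : ∫ t : ℝ, t ^ 2 * gaussianPDFReal 0 1 t = 1 := by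
  have h := variance_fun_id_gaussianReal (μ := 0) (v := 1)
  rw [variance_eq_integral (by fun_prop)] at h
  simp only [integral_id_gaussianReal, sub_zero] at h
  rw [integral_gaussianReal_eq_integral_smul one_ne_zero] at h
  simpa [mul_comm] using h

/-- The density of the standard Gaussian measure on `ℝ^d`. -/
noncomputable def stdDensity {d : ℕ} (z : Fin d → ℝ) : ℝ :=
  ∏ i, gaussianPDFReal 0 1 (z i)

theorem stdDensity_eq {d : ℕ} (z : Fin d → ℝ) :
    stdDensity z = (Real.sqrt ((2 * Real.pi) ^ d))⁻¹ * Real.exp (-(1 / 2 : ℝ) * (z ⬝ᵥ z)) := by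
  simp only [stdDensity, gaussianPDFReal, Finset.prod_mul_distrib, ← Real.exp_sum]
  congr 1
  · simp [Real.sqrt_eq_rpow, ← Real.rpow_pow_comm Real.two_pi_pos.le]
  · congr 1
    simp only [dotProduct, Finset.mul_sum]
    refine Finset.sum_congr rfl fun i _ => ?_
    simp
    ring

theorem integrable_stdDensity {d : ℕ} : Integrable (stdDensity (d := d)) :=
  Integrable.fintype_prod fun _ => integrable_gaussianPDFReal 0 1

theorem integral_stdDensity {d : ℕ} : ∫ z : Fin d → ℝ, stdDensity z = 1 := by
  simp only [stdDensity]
  rw [integral_fintype_prod_volume_eq_prod fun _ => gaussianPDFReal 0 1]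
  simp [integral_gaussianPDFReal_eq_one]

theorem coord_mul_stdDensity {d : ℕ} (i : Fin d) (z : Fin d → ℝ) :
    z i * stdDensity z =
      ∏ k, (if k = i then z k else 1) * gaussianPDFReal 0 1 (z k) := by
  rw [Finset.prod_mul_distrib]
  simp [stdDensity]

theorem integrable_coord_mul_stdDensity {d : ℕ} (i : Fin d) :
    Integrable fun z : Fin d → ℝ => z i * stdDensity z := by
  simp_rw [coord_mul_stdDensity]
  refine Integrable.fintype_prod
    (f := fun k t => (if k = i then t else 1) * gaussianPDFReal 0 1 t) fun k => ?_
  by_cases h : k = i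
  · simpa [h] using integrable_pow_mul_gaussianPDFReal 1
  · simpa [h] using integrable_gaussianPDFReal 0 1

theorem integral_coord_mul_stdDensity {d : ℕ} (i : Fin d) :
    ∫ z : Fin d → ℝ, z i * stdDensity z = 0 := by
  simp_rw [coord_mul_stdDensity]
  rw [integral_fintype_prod_volume_eq_prod
    fun k t => (if k = i then t else 1) * gaussianPDFReal 0 1 t]
  exact Finset.prod_eq_zero (Finset.mem_univ i)
    (by simpa using integral_mul_gaussianPDFReal)

theorem coord_mul_coord_mul_stdDensity {d : ℕ} (i j : Fin d) (z : Fin d → ℝ) :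
    z i * z j * stdDensity z =
      ∏ k, (if k = i then z k else 1) * (if k = j then z k else 1) *
        gaussianPDFReal 0 1 (z k) := by
  rw [Finset.prod_mul_distrib, Finset.prod_mul_distrib]
  simp [stdDensity]

theorem integrable_coord_mul_coord_mul_stdDensity {d : ℕ} (i j : Fin d) :
    Integrable fun z : Fin d → ℝ => z i * z j * stdDensity z := by
  simp_rw [coord_mul_coord_mul_stdDensity]
  refine Integrable.fintype_prod (f := fun k t =>
    (if k = i then t else 1) * (if k = j then t else 1) * gaussianPDFReal 0 1 t) fun k => ?_
  by_cases hi : k = i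
  · subst hi
    by_cases hj : k = j
    · simpa [hj, ← sq] using integrable_pow_mul_gaussianPDFReal 2
    · simpa [hj] using integrable_pow_mul_gaussianPDFReal 1
  · by_cases hj : k = j
    · subst hj
      simpa [hi] using integrable_pow_mul_gaussianPDFReal 1
    · simpa [hi, hj] using integrable_gaussianPDFReal 0 1

theorem integral_coord_mul_coord_mul_stdDensity {d : ℕ} (i j : Fin d) :
    ∫ z : Fin d → ℝ, z i * z j * stdDensity z = if i = j then 1 else 0 := by
  simp_rw [coord_mul_coord_mul_stdDensity]
  rw [integral_fintype_prod_volume_eq_prod fun k t =>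
    (if k = i then t else 1) * (if k = j then t else 1) * gaussianPDFReal 0 1 t]
  split_ifs with h
  · subst h
    refine Finset.prod_eq_one fun k _ => ?_
    by_cases hk : k = i
    · simpa only [hk, if_true, ← sq] using integral_sq_mul_gaussianPDFReal
    · simpa only [hk, if_false, one_mul] using integral_gaussianPDFReal_eq_one 0 one_ne_zero
  · exact Finset.prod_eq_zero (Finset.mem_univ i)
      (by simpa [h] using integral_mul_gaussianPDFReal)

theorem integral_quadratic_mul_stdDensity {d : ℕ} (c : ℝ) (b : Fin d → ℝ)
    (M : Matrix (Fin d) (Fin d) ℝ) :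
    ∫ z : Fin d → ℝ, (c + b ⬝ᵥ z + z ⬝ᵥ M.mulVec z) * stdDensity z = c + M.trace := by
  have h (z : Fin d → ℝ) : (c + b ⬝ᵥ z + z ⬝ᵥ M.mulVec z) * stdDensity z =
      c * stdDensity z + ∑ i, b i * (z i * stdDensity z) +
        ∑ i, ∑ j, M i j * (z i * z j * stdDensity z) := by
    simp only [dotProduct, mulVec, add_mul, Finset.sum_mul, Finset.mul_sum]
    congr 1
    · congr 1
      exact Finset.sum_congr rfl fun i _ => by ring
    · exact Finset.sum_congr rfl fun i _ => Finset.sum_congr rfl fun j _ => by ring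
  have h₀ : Integrable fun z : Fin d → ℝ => c * stdDensity z := integrable_stdDensity.const_mul c
  have h₁ (i : Fin d) : Integrable fun z : Fin d → ℝ => b i * (z i * stdDensity z) :=
    (integrable_coord_mul_stdDensity i).const_mul _
  have h₂ (i j : Fin d) : Integrable fun z : Fin d → ℝ => M i j * (z i * z j * stdDensity z) :=
    (integrable_coord_mul_coord_mul_stdDensity i j).const_mul _
  have h₁' : Integrable fun z : Fin d → ℝ => ∑ i, b i * (z i * stdDensity z) :=
    integrable_finsetSum _ fun i _ => h₁ i
  have h₂' (i : Fin d) :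
      Integrable fun z : Fin d → ℝ => ∑ j, M i j * (z i * z j * stdDensity z) :=
    integrable_finsetSum _ fun j _ => h₂ i j
  have h₂'' : Integrable fun z : Fin d → ℝ => ∑ i, ∑ j, M i j * (z i * z j * stdDensity z) :=
    integrable_finsetSum _ fun i _ => h₂' i
  have h₀₁ : Integrable fun z : Fin d → ℝ =>
      c * stdDensity z + ∑ i, b i * (z i * stdDensity z) := h₀.add h₁'
  simp_rw [h]
  rw [integral_add h₀₁ h₂'', integral_add h₀ h₁', integral_finsetSum _ fun i _ => h₁ i,
    integral_finsetSum _ fun i _ => h₂' i]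
  simp_rw [fun i => integral_finsetSum Finset.univ fun j _ => h₂ i j, integral_const_mul,
    integral_stdDensity, integral_coord_mul_stdDensity, integral_coord_mul_coord_mul_stdDensity]
  simp [trace]

theorem exists_isSymm_mul_self_eq {d : ℕ} {S : Matrix (Fin d) (Fin d) ℝ} (hS : S.PosDef) :
    ∃ A : Matrix (Fin d) (Fin d) ℝ, Aᵀ = A ∧ A * A = S := by
  open scoped MatrixOrder Matrix.Norms.L2Operator in
  have h0 : 0 ≤ S := nonneg_iff_posSemidef.2 hS.posSemidef
  refine ⟨CFC.sqrt S, ?_, CFC.sqrt_mul_sqrt_self S h0⟩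
  have h := (nonneg_iff_posSemidef.1 (CFC.sqrt_nonneg S)).isHermitian.eq
  rwa [conjTranspose_eq_transpose_of_trivial] at h

theorem integral_eq_integral_add_mulVec {d : ℕ} (μ : Fin d → ℝ)
    {A : Matrix (Fin d) (Fin d) ℝ} (hA : A.det ≠ 0) (F : (Fin d → ℝ) → ℝ) :
    ∫ x, F x = ∫ z, |A.det| * F (μ + A.mulVec z) := by
  have hu : IsUnit A := (isUnit_iff_isUnit_det A).2 hA.isUnit
  have hderiv (x : Fin d → ℝ) :
      HasFDerivAt (fun z => μ + A.mulVec z) (LinearMap.toContinuousLinearMap (toLin' A)) x :=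
    ((LinearMap.toContinuousLinearMap (toLin' A)).hasFDerivAt).const_add μ
  have himage : (fun z => μ + A.mulVec z) '' Set.univ = Set.univ := by
    rw [Set.image_univ, Set.range_eq_univ]
    exact (add_left_surjective μ).comp (mulVec_surjective_iff_isUnit.2 hu)
  have h := integral_image_eq_integral_abs_det_fderiv_smul volume MeasurableSet.univ
    (fun x _ => (hderiv x).hasFDerivWithinAt)
    ((add_right_injective μ).comp (mulVec_injective_iff_isUnit.2 hu)).injOn F
  have hdet : (LinearMap.toContinuousLinearMap (toLin' A)).det = A.det :=
    LinearMap.det_toLin' A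
  rw [himage, setIntegral_univ, setIntegral_univ] at h
  simpa only [hdet, smul_eq_mul] using h

/-- The density of `multiGaussian μ S` with respect to the Lebesgue measure. -/
noncomputable def gaussianDensity {d : ℕ} (μ : Fin d → ℝ) (S : Matrix (Fin d) (Fin d) ℝ)
    (x : Fin d → ℝ) : ℝ :=
  (Real.sqrt ((2 * Real.pi) ^ d * S.det))⁻¹ *
    Real.exp (-(1 / 2 : ℝ) * ((x - μ) ⬝ᵥ S⁻¹.mulVec (x - μ)))

theorem multiGaussian_eq_withDensity {d : ℕ} (μ : Fin d → ℝ) (S : Matrix (Fin d) (Fin d) ℝ) :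
    multiGaussian μ S = volume.withDensity fun x => ENNReal.ofReal (gaussianDensity μ S x) :=
  rfl

section Density

variable {d : ℕ} (μ : Fin d → ℝ) {S : Matrix (Fin d) (Fin d) ℝ}

theorem sqrt_two_pi_pow_mul_det_pos (hS : S.PosDef) :
    0 < Real.sqrt ((2 * Real.pi) ^ d * S.det) :=
  Real.sqrt_pos.2 (mul_pos (pow_pos Real.two_pi_pos d) hS.det_pos)

theorem gaussianDensity_pos (hS : S.PosDef) (x : Fin d → ℝ) : 0 < gaussianDensity μ S x :=
  mul_pos (inv_pos.2 (sqrt_two_pi_pow_mul_det_pos hS)) (Real.exp_pos _)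

theorem measurable_gaussianDensity (S : Matrix (Fin d) (Fin d) ℝ) :
    Measurable (gaussianDensity μ S) := by
  refine Continuous.measurable ?_
  unfold gaussianDensity
  fun_prop

theorem log_gaussianDensity (hS : S.PosDef) (x : Fin d → ℝ) :
    Real.log (gaussianDensity μ S x) =
      -(1 / 2 : ℝ) * (Real.log ((2 * Real.pi) ^ d) + Real.log S.det +
        (x - μ) ⬝ᵥ S⁻¹.mulVec (x - μ)) := by
  have hpi : (2 * Real.pi) ^ d ≠ 0 := (pow_pos Real.two_pi_pos d).ne'
  rw [gaussianDensity, Real.log_mul (inv_pos.2 (sqrt_two_pi_pow_mul_det_pos hS)).ne'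
    (Real.exp_pos _).ne', Real.log_exp, Real.log_inv,
    Real.log_sqrt (mul_pos (pow_pos Real.two_pi_pos d) hS.det_pos).le,
    Real.log_mul hpi hS.det_pos.ne']
  ring

theorem mulVec_dotProduct_inv_mulVec {A : Matrix (Fin d) (Fin d) ℝ} (hS : S.PosDef)
    (hAt : Aᵀ = A) (hA : A * A = S) (z : Fin d → ℝ) :
    A.mulVec z ⬝ᵥ S⁻¹.mulVec (A.mulVec z) = z ⬝ᵥ z := by
  have hu : IsUnit A.det :=
    isUnit_of_mul_isUnit_left (by rw [← det_mul, hA]; exact hS.det_pos.ne'.isUnit)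
  have h : A * (S⁻¹ * A) = 1 := by
    rw [← hA, Matrix.mul_inv_rev, Matrix.mul_assoc, nonsing_inv_mul _ hu, Matrix.mul_one,
      mul_nonsing_inv _ hu]
  rw [mulVec_mulVec, dotProduct_comm, dotProduct_mulVec, ← mulVec_transpose, hAt, mulVec_mulVec,
    h, one_mulVec]

theorem abs_det_mul_gaussianDensity {A : Matrix (Fin d) (Fin d) ℝ} (hS : S.PosDef)
    (hAt : Aᵀ = A) (hA : A * A = S) (z : Fin d → ℝ) :
    |A.det| * gaussianDensity μ S (μ + A.mulVec z) = stdDensity z := by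
  have hdet : S.det = A.det * A.det := by rw [← hA, det_mul]
  have hne : |A.det| ≠ 0 := fun h => hS.det_pos.ne' (by simp [hdet, abs_eq_zero.1 h])
  rw [stdDensity_eq, gaussianDensity, add_sub_cancel_left,
    mulVec_dotProduct_inv_mulVec hS hAt hA, hdet,
    Real.sqrt_mul (pow_pos Real.two_pi_pos d).le, Real.sqrt_mul_self_eq_abs]
  field_simp

theorem integral_multiGaussian {A : Matrix (Fin d) (Fin d) ℝ} (hS : S.PosDef)
    (hAt : Aᵀ = A) (hA : A * A = S) (F : (Fin d → ℝ) → ℝ) :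
    ∫ x, F x ∂(multiGaussian μ S) = ∫ z, F (μ + A.mulVec z) * stdDensity z := by
  have hne : A.det ≠ 0 := fun h => hS.det_pos.ne' (by rw [← hA, det_mul, h, zero_mul])
  rw [multiGaussian_eq_withDensity, integral_withDensity_eq_integral_toReal_smul
      (measurable_gaussianDensity μ S).ennreal_ofReal (ae_of_all _ fun _ => ENNReal.ofReal_lt_top),
    integral_eq_integral_add_mulVec μ hne]
  refine integral_congr_ae (ae_of_all _ fun z => ?_)
  simp only [smul_eq_mul, ENNReal.toReal_ofReal (gaussianDensity_pos μ hS _).le,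
    ← abs_det_mul_gaussianDensity μ hS hAt hA z]
  ring

theorem log_rnDeriv_multiGaussian (μ' : Fin d → ℝ) {S' : Matrix (Fin d) (Fin d) ℝ} (hS : S.PosDef)
    (hS' : S'.PosDef) :
    ∀ᵐ x ∂(multiGaussian μ S),
      Real.log ((multiGaussian μ S).rnDeriv (multiGaussian μ' S') x).toReal =
        Real.log (gaussianDensity μ S x) - Real.log (gaussianDensity μ' S' x) := by
  simp only [multiGaussian_eq_withDensity]
  refine (withDensity_absolutelyContinuous _ _).ae_le ?_
  filter_upwards [Measure.rnDeriv_withDensity_right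
      (volume.withDensity fun x => ENNReal.ofReal (gaussianDensity μ S x)) volume
      (f := fun x => ENNReal.ofReal (gaussianDensity μ' S' x))
      (measurable_gaussianDensity μ' S').ennreal_ofReal.aemeasurable
      (ae_of_all _ fun x => (ENNReal.ofReal_pos.2 (gaussianDensity_pos μ' hS' x)).ne')
      (ae_of_all _ fun _ => ENNReal.ofReal_ne_top),
    Measure.rnDeriv_withDensity volume (measurable_gaussianDensity μ S).ennreal_ofReal]
    with x h₁ h₂
  have hp := gaussianDensity_pos μ hS x
  have hp' := gaussianDensity_pos μ' hS' x
  rw [h₁, h₂, ENNReal.toReal_mul, ENNReal.toReal_inv, ENNReal.toReal_ofReal hp.le,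
    ENNReal.toReal_ofReal hp'.le, Real.log_mul (inv_pos.2 hp').ne' hp.ne', Real.log_inv]
  ring

/-- The Kullback–Leibler divergence between two nondegenerate Gaussian measures. -/
theorem klDiv_multiGaussian (μ' : Fin d → ℝ) {S' : Matrix (Fin d) (Fin d) ℝ} (hS : S.PosDef)
    (hS' : S'.PosDef) :
    klDiv (multiGaussian μ S) (multiGaussian μ' S') =
      1 / 2 * (Real.log S'.det - Real.log S.det - d + (S'⁻¹ * S).trace +
        (μ - μ') ⬝ᵥ S'⁻¹.mulVec (μ - μ')) := by
  obtain ⟨A, hAt, hA⟩ := exists_isSymm_mul_self_eq hS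
  set m := μ - μ' with hm
  set c : ℝ := 1 / 2 * (Real.log S'.det - Real.log S.det + m ⬝ᵥ S'⁻¹.mulVec m)
  set b : Fin d → ℝ :=
    (1 / 2 : ℝ) • (A.mulVec (S'⁻¹.mulVec m) + (A * S'⁻¹ᵀ).mulVec m)
  set M : Matrix (Fin d) (Fin d) ℝ := (1 / 2 : ℝ) • (A * (S'⁻¹ * A) - 1)
  have key (z : Fin d → ℝ) :
      Real.log (gaussianDensity μ S (μ + A.mulVec z)) -
        Real.log (gaussianDensity μ' S' (μ + A.mulVec z)) = c + b ⬝ᵥ z + z ⬝ᵥ M.mulVec z := by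
    have hA_left (v : Fin d → ℝ) : A.mulVec z ⬝ᵥ v = z ⬝ᵥ A.mulVec v := by
      rw [dotProduct_mulVec, ← mulVec_transpose, hAt]
    have hS_right : m ⬝ᵥ S'⁻¹.mulVec (A.mulVec z) = (A * S'⁻¹ᵀ).mulVec m ⬝ᵥ z := by
      rw [← mulVec_mulVec, dotProduct_mulVec, ← mulVec_transpose, dotProduct_comm, hA_left,
        dotProduct_comm]
    rw [log_gaussianDensity μ hS, log_gaussianDensity μ' hS', add_sub_cancel_left,
      mulVec_dotProduct_inv_mulVec hS hAt hA, show μ + A.mulVec z - μ' = m + A.mulVec z by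
        rw [hm]; abel, mulVec_add, add_dotProduct, dotProduct_add, dotProduct_add, hS_right,
      hA_left, hA_left]
    simp only [c, b, M, smul_dotProduct, add_dotProduct, smul_mulVec, sub_mulVec,
      dotProduct_smul, dotProduct_sub, one_mulVec, smul_eq_mul, ← mulVec_mulVec]
    rw [dotProduct_comm z (A.mulVec (S'⁻¹.mulVec m))]
    ring
  rw [klDiv, integral_congr_ae (log_rnDeriv_multiGaussian μ μ' hS hS'),
    integral_multiGaussian μ hS hAt hA]
  simp_rw [key]
  rw [integral_quadratic_mul_stdDensity, trace_smul, trace_sub, trace_one, Fintype.card_fin,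
    trace_mul_comm, Matrix.mul_assoc, hA, smul_eq_mul]
  ring

end Density

theorem posDef_one_add_mul_mul_transpose {d M : ℕ} (Ψ : Matrix (Fin d) (Fin M) ℝ)
    {B : Matrix (Fin M) (Fin M) ℝ} (hB : B.PosDef) : (1 + Ψ * B * Ψᵀ).PosDef := by
  have h := hB.posSemidef.mul_mul_conjTranspose_same Ψ
  rw [conjTranspose_eq_transpose_of_trivial] at h
  exact PosDef.one.add_posSemidef h

theorem det_one_add_mul_mul_transpose {d M : ℕ} (Ψ : Matrix (Fin d) (Fin M) ℝ)
    (B : Matrix (Fin M) (Fin M) ℝ) :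
    (1 + Ψ * B * Ψᵀ).det = (1 + (Ψᵀ * Ψ) * B).det := by
  rw [det_one_add_mul_comm, Matrix.mul_assoc]

theorem inv_one_add_mul_mul_transpose {d M : ℕ} (Ψ : Matrix (Fin d) (Fin M) ℝ)
    {B : Matrix (Fin M) (Fin M) ℝ} (hB : B.PosDef) :
    (1 + Ψ * B * Ψᵀ)⁻¹ = 1 - Ψ * (B⁻¹ + Ψᵀ * Ψ)⁻¹ * Ψᵀ := by
  have h : (B⁻¹ + Ψᵀ * Ψ).PosDef := by
    have h := posSemidef_conjTranspose_mul_self Ψ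
    rw [conjTranspose_eq_transpose_of_trivial] at h
    exact hB.inv.add_posSemidef h
  rw [add_mul_mul_inv_eq_sub _ _ _ _ isUnit_one hB.isUnit (by simpa using h.isUnit)]
  simp

theorem trace_mul_inv_one_add {d M M' : ℕ} (Ψ : Matrix (Fin d) (Fin M) ℝ)
    (Ψ' : Matrix (Fin d) (Fin M') ℝ) {B : Matrix (Fin M) (Fin M) ℝ}
    (B' : Matrix (Fin M') (Fin M') ℝ) (hB : B.PosDef) :
    ((1 + Ψ' * B' * Ψ'ᵀ) * (1 + Ψ * B * Ψᵀ)⁻¹).trace =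
      d + ((Ψ'ᵀ * Ψ') * B').trace -
        ((Ψᵀ * Ψ + (Ψᵀ * Ψ') * B' * (Ψ'ᵀ * Ψ)) * (B⁻¹ + Ψᵀ * Ψ)⁻¹).trace := by
  rw [inv_one_add_mul_mul_transpose Ψ hB, Matrix.mul_sub, Matrix.mul_one, trace_sub, trace_add,
    trace_one, Fintype.card_fin, Matrix.mul_assoc Ψ', trace_mul_comm Ψ', Matrix.mul_assoc B',
    trace_mul_comm B']
  congr 1
  rw [← Matrix.mul_assoc, trace_mul_comm, ← Matrix.mul_assoc, ← Matrix.mul_assoc]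
  simp only [Matrix.mul_add, Matrix.add_mul, Matrix.mul_one, Matrix.mul_assoc]

theorem mulVec_dotProduct_one_add_mulVec {d M N N' : ℕ} (Φ : Matrix (Fin d) (Fin N) ℝ)
    (Φ' : Matrix (Fin d) (Fin N') ℝ) (Ψ : Matrix (Fin d) (Fin M) ℝ)
    (B : Matrix (Fin M) (Fin M) ℝ) (u : Fin N → ℝ) (v : Fin N' → ℝ) :
    Φ.mulVec u ⬝ᵥ (1 + Ψ * B * Ψᵀ).mulVec (Φ'.mulVec v) =
      u ⬝ᵥ (Φᵀ * Φ' + (Φᵀ * Ψ) * B * (Ψᵀ * Φ')).mulVec v := by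
  rw [dotProduct_comm, dotProduct_mulVec, ← mulVec_transpose, dotProduct_comm, mulVec_mulVec,
    mulVec_mulVec]
  simp only [Matrix.add_mul, Matrix.mul_add, Matrix.one_mul, Matrix.mul_assoc]

/-- closed form of the KL divergence between two
subspace-parametrized Gaussian measures
`q = N(Ψα a, (I + Ψβ B Ψβᵀ)⁻¹)` and `p = N(Ψᾱ ā, (I + Ψβ̄ B̄ Ψβ̄ᵀ)⁻¹)`,
where `K_{1,2} = Ψ₁ᵀ Ψ₂` denote the Gram matrices. -/
theorem stmt_1 (d Mα Mβ Mα' Mβ' : ℕ) (hd : 1 ≤ d) (hMα : 1 ≤ Mα)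
    (hMβ : 1 ≤ Mβ) (hMα' : 1 ≤ Mα') (hMβ' : 1 ≤ Mβ')
    (Ψα : Matrix (Fin d) (Fin Mα) ℝ) (Ψβ : Matrix (Fin d) (Fin Mβ) ℝ)
    (Ψα' : Matrix (Fin d) (Fin Mα') ℝ) (Ψβ' : Matrix (Fin d) (Fin Mβ') ℝ)
    (a : Fin Mα → ℝ) (a' : Fin Mα' → ℝ)
    (B : Matrix (Fin Mβ) (Fin Mβ) ℝ) (B' : Matrix (Fin Mβ') (Fin Mβ') ℝ)
    (hB : B.PosDef) (hB' : B'.PosDef) :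
    klDiv (multiGaussian (Ψα.mulVec a) ((1 + Ψβ * B * Ψβᵀ)⁻¹))
        (multiGaussian (Ψα'.mulVec a') ((1 + Ψβ' * B' * Ψβ'ᵀ)⁻¹)) =
      -(1 / 2 : ℝ) *
          (((Ψβᵀ * Ψβ + (Ψβᵀ * Ψβ') * B' * (Ψβ'ᵀ * Ψβ)) *
            (B⁻¹ + Ψβᵀ * Ψβ)⁻¹).trace)
        + (1 / 2 : ℝ) * Real.log (1 + (Ψβᵀ * Ψβ) * B).det
        + (1 / 2 : ℝ) *
            (a ⬝ᵥ (Ψαᵀ * Ψα + (Ψαᵀ * Ψβ') * B' * (Ψβ'ᵀ * Ψα)).mulVec a)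
        - a ⬝ᵥ (Ψαᵀ * Ψα' + (Ψαᵀ * Ψβ') * B' * (Ψβ'ᵀ * Ψα')).mulVec a'
        + (1 / 2 : ℝ) *
            (((Ψβ'ᵀ * Ψβ') * B').trace
              - Real.log (1 + (Ψβ'ᵀ * Ψβ') * B').det
              + a' ⬝ᵥ (Ψα'ᵀ * Ψα'
                  + (Ψα'ᵀ * Ψβ') * B' * (Ψβ'ᵀ * Ψα')).mulVec a') := by
  have hP := posDef_one_add_mul_mul_transpose Ψβ hB
  have hP' := posDef_one_add_mul_mul_transpose Ψβ' hB'
  have hsymm : Ψα'.mulVec a' ⬝ᵥ (1 + Ψβ' * B' * Ψβ'ᵀ).mulVec (Ψα.mulVec a) =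
      Ψα.mulVec a ⬝ᵥ (1 + Ψβ' * B' * Ψβ'ᵀ).mulVec (Ψα'.mulVec a') := by
    have ht : (1 + Ψβ' * B' * Ψβ'ᵀ)ᵀ = 1 + Ψβ' * B' * Ψβ'ᵀ := by
      rw [← conjTranspose_eq_transpose_of_trivial, hP'.isHermitian.eq]
    rw [dotProduct_mulVec, ← mulVec_transpose, ht, dotProduct_comm]
  rw [klDiv_multiGaussian _ _ hP.inv hP'.inv, nonsing_inv_nonsing_inv _ hP'.det_pos.ne'.isUnit,
    trace_mul_inv_one_add Ψβ Ψβ' B' hB, det_nonsing_inv, det_nonsing_inv,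
    Ring.inverse_eq_inv', Real.log_inv, Real.log_inv,
    det_one_add_mul_mul_transpose, det_one_add_mul_mul_transpose, mulVec_sub, dotProduct_sub,
    sub_dotProduct, sub_dotProduct, hsymm]
  simp only [mulVec_dotProduct_one_add_mulVec]
  ring
end

section
/- Let d, M_α, M_β ≥ 1, let Ψ_α ∈ ℝ^{d×M_α} and Ψ_β ∈ ℝ^{d×M_β} be matrices, a ∈ ℝ^{M_α}, and let B ∈ ℝ^{M_β×M_β} be symmetric positive definite. Define q = N(Ψ_α a, (I + Ψ_β B Ψ_βᵀ)⁻¹) and p = N(0, I). Then KL(q ‖ p) = (1/2)·aᵀ K_α a + (1/2)·log det(I + K_β B) − (1/2)·tr( K_β (B⁻¹ + K_β)⁻¹ ). -/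
open Matrix MeasureTheory

open ProbabilityTheory in
/-- The standard Gaussian density on `ℝ^d` is the density of a product of standard Gaussians. -/
lemma multiGaussian_zero_one (d : ℕ) :
    multiGaussian (0 : Fin d → ℝ) 1 = Measure.pi fun _ => gaussianReal 0 1 := by
  symm
  refine Measure.pi_eq fun s hs => ?_
  have hpdf : (fun x : Fin d → ℝ => ENNReal.ofReal
      ((Real.sqrt ((2 * Real.pi) ^ d * (1 : Matrix (Fin d) (Fin d) ℝ).det))⁻¹ *
        Real.exp (-(1 / 2 : ℝ) * ((x - 0) ⬝ᵥ (1 : Matrix (Fin d) (Fin d) ℝ)⁻¹.mulVec (x - 0))))) =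
      fun x => ENNReal.ofReal (∏ i, gaussianPDFReal 0 1 (x i)) := by
    ext x
    congr 1
    simp only [gaussianPDFReal, Finset.prod_mul_distrib, ← Real.exp_sum, Finset.prod_const,
      Finset.card_univ, Fintype.card_fin, det_one, sub_zero, inv_one, one_mulVec, mul_one,
      NNReal.coe_one, dotProduct]
    congr 1
    · have h : Real.sqrt ((2 * Real.pi) ^ d) = Real.sqrt (2 * Real.pi) ^ d := by
        rw [← Real.sqrt_sq (by positivity : (0 : ℝ) ≤ Real.sqrt (2 * Real.pi) ^ d), ← pow_mul,
          mul_comm d 2, pow_mul, Real.sq_sqrt (by positivity)]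
      rw [inv_pow, h]
    · congr 1
      rw [Finset.mul_sum]
      exact Finset.sum_congr rfl fun i _ => by ring
  rw [multiGaussian, hpdf, withDensity_apply _ (MeasurableSet.univ_pi hs), volume_pi,
    Measure.restrict_pi_pi, ← ofReal_integral_eq_lintegral_ofReal,
    integral_fintype_prod_eq_prod (𝕜 := ℝ) (fun _ y => gaussianPDFReal 0 1 y),
    ENNReal.ofReal_prod_of_nonneg]
  · refine Finset.prod_congr rfl fun i _ => ?_
    rw [gaussianReal_apply_eq_integral _ one_ne_zero]
  · exact fun i _ => integral_nonneg fun y => gaussianPDFReal_nonneg _ _ _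
  · exact Integrable.fintype_prod (𝕜 := ℝ) (f := fun _ y => gaussianPDFReal 0 1 y)
      fun i => (integrable_gaussianPDFReal 0 1).restrict
  · exact ae_of_all _ fun x => Finset.prod_nonneg fun i _ => gaussianPDFReal_nonneg _ _ _

lemma withDensity_map_eq_map_withDensity {X Y : Type*} [MeasurableSpace X] [MeasurableSpace Y]
    {μ : Measure X} {T : X → Y} (hT : Measurable T) {f : Y → ENNReal} (hf : Measurable f) :
    (μ.map T).withDensity f = (μ.withDensity (f ∘ T)).map T := by
  ext s hs
  rw [withDensity_apply _ hs, Measure.map_apply hT hs, withDensity_apply _ (hT hs),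
    setLIntegral_map hs hf hT]
  rfl

lemma continuous_sub_dotProduct_mulVec_sub {d : ℕ} (m : Fin d → ℝ)
    (A : Matrix (Fin d) (Fin d) ℝ) :
    Continuous fun x : Fin d → ℝ => (x - m) ⬝ᵥ A.mulVec (x - m) :=
  (by fun_prop : Continuous fun x : Fin d → ℝ => x - m).dotProduct
    (Continuous.matrix_mulVec continuous_const (by fun_prop))

lemma measurable_multiGaussian_density {d : ℕ} (m : Fin d → ℝ) (S : Matrix (Fin d) (Fin d) ℝ) :
    Measurable fun x : Fin d → ℝ =>
    ENNReal.ofReal ((Real.sqrt ((2 * Real.pi) ^ d * S.det))⁻¹ *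
      Real.exp (-(1 / 2 : ℝ) * ((x - m) ⬝ᵥ S⁻¹.mulVec (x - m)))) := by
  have := (continuous_sub_dotProduct_mulVec_sub m S⁻¹).measurable
  fun_prop

open ProbabilityTheory in
/-- A nondegenerate Gaussian is an affine image of the standard one. -/
lemma multiGaussian_eq_map {d : ℕ} (m : Fin d → ℝ) {R : Matrix (Fin d) (Fin d) ℝ}
    (hR : R.det ≠ 0) :
    multiGaussian m (Rᵀ * R)⁻¹ =
      (Measure.pi fun _ => gaussianReal 0 1).map fun y => m + R⁻¹.mulVec y := by
  have hunit : IsUnit R.det := hR.isUnit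
  have hT : Measurable fun y : Fin d → ℝ => m + R⁻¹.mulVec y :=
    (continuous_const.add (Continuous.matrix_mulVec continuous_const continuous_id)).measurable
  have hvol : (volume : Measure (Fin d → ℝ)).map (fun y => m + R⁻¹.mulVec y) =
      ENNReal.ofReal |R.det| • volume := by
    have h1 := Real.map_matrix_volume_pi_eq_smul_volume_pi (M := R⁻¹)
      (by simpa [det_nonsing_inv] using hR)
    have h2 : (fun y => m + R⁻¹.mulVec y) = (fun y => m + y) ∘ (toLin' R⁻¹) := by
      ext y; simp
    rw [h2, ← Measure.map_map (measurable_const_add m) (LinearMap.continuous_on_pi _).measurable,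
      h1, Measure.map_smul, map_add_left_eq_self]
    simp [det_nonsing_inv]
  rw [← multiGaussian_zero_one, multiGaussian, multiGaussian]
  have hcomp : (fun x : Fin d → ℝ => ENNReal.ofReal
      ((Real.sqrt ((2 * Real.pi) ^ d * (1 : Matrix (Fin d) (Fin d) ℝ).det))⁻¹ *
        Real.exp (-(1 / 2 : ℝ) * ((x - 0) ⬝ᵥ (1 : Matrix (Fin d) (Fin d) ℝ)⁻¹.mulVec (x - 0))))) =
      (fun x : Fin d → ℝ => ENNReal.ofReal
        ((Real.sqrt ((2 * Real.pi) ^ d * (1 : Matrix (Fin d) (Fin d) ℝ).det))⁻¹ *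
        Real.exp (-(1 / 2 : ℝ) * ((x - m) ⬝ᵥ ((Rᵀ * R)⁻¹)⁻¹.mulVec (x - m))))) ∘
        (fun y => m + R⁻¹.mulVec y) := by
    ext y
    have hy : (R⁻¹ *ᵥ y) ⬝ᵥ (Rᵀ * R) *ᵥ R⁻¹ *ᵥ y = y ⬝ᵥ y := by
      rw [← mulVec_mulVec, dotProduct_mulVec, vecMul_transpose, mulVec_mulVec,
        mul_nonsing_inv _ hunit, one_mulVec]
    simp only [Function.comp_apply, add_sub_cancel_left, sub_zero, inv_one, one_mulVec,
      nonsing_inv_nonsing_inv (Rᵀ * R) (by simpa using hR), hy]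
  have hmeas : Measurable (fun x : Fin d → ℝ => ENNReal.ofReal
        ((Real.sqrt ((2 * Real.pi) ^ d * (1 : Matrix (Fin d) (Fin d) ℝ).det))⁻¹ *
        Real.exp (-(1 / 2 : ℝ) * ((x - m) ⬝ᵥ ((Rᵀ * R)⁻¹)⁻¹.mulVec (x - m))))) := by
    have := (continuous_sub_dotProduct_mulVec_sub m ((Rᵀ * R)⁻¹)⁻¹).measurable
    fun_prop
  rw [hcomp, ← withDensity_map_eq_map_withDensity hT hmeas, hvol, withDensity_smul_measure,
    ← withDensity_smul _ hmeas]
  congr 1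
  ext x
  simp only [Pi.smul_apply, smul_eq_mul, det_one, mul_one]
  rw [← ENNReal.ofReal_mul (abs_nonneg _), ← mul_assoc]
  congr 2
  have hpi : (0 : ℝ) ≤ (2 * Real.pi) ^ d := by positivity
  have hdet : (Rᵀ * R)⁻¹.det = (R.det ^ 2)⁻¹ := by
    simp [det_nonsing_inv, sq]
  rw [hdet, Real.sqrt_mul hpi, Real.sqrt_inv, Real.sqrt_sq_eq_abs, mul_inv, inv_inv, mul_comm]

open ProbabilityTheory in
lemma integrable_eval_mul_eval_pi_gaussianReal {d : ℕ} (i j : Fin d) :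
    Integrable (fun y : Fin d → ℝ => y i * y j) (Measure.pi fun _ => gaussianReal 0 1) :=
  have h (i : Fin d) : MemLp (fun y : Fin d → ℝ => y i) 2 (Measure.pi fun _ => gaussianReal 0 1) :=
    (memLp_id_gaussianReal (μ := 0) (v := 1) 2).comp_measurePreserving
      (measurePreserving_eval (fun _ : Fin d => gaussianReal 0 1) i)
  (h i).integrable_mul (h j)

open ProbabilityTheory in
lemma integral_eval_mul_eval_pi_gaussianReal {d : ℕ} (i j : Fin d) :
    ∫ y : Fin d → ℝ, y i * y j ∂(Measure.pi fun _ => gaussianReal 0 1) =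
      (1 : Matrix (Fin d) (Fin d) ℝ) i j := by
  rcases eq_or_ne i j with rfl | hij
  · rw [one_apply_eq, integral_comp_eval (μ := fun _ : Fin d => gaussianReal 0 1)
      (f := fun t : ℝ => t * t) (by fun_prop)]
    have h := variance_eq_sub (memLp_id_gaussianReal (μ := 0) (v := 1) 2)
    rw [variance_id_gaussianReal] at h
    simpa [sq] using h.symm
  · rw [one_apply_ne hij]
    have h : IndepFun (fun y : Fin d → ℝ => y i) (fun y : Fin d → ℝ => y j)
        (Measure.pi fun _ => gaussianReal 0 1) :=
      (iIndepFun_pi (X := fun _ t => t) (fun _ => aemeasurable_id)).indepFun hij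
    rw [h.integral_fun_mul_eq_mul_integral (measurable_pi_apply i).aestronglyMeasurable
      (measurable_pi_apply j).aestronglyMeasurable,
      integral_eval (μ := fun _ : Fin d => gaussianReal 0 1)]
    simp

open ProbabilityTheory in
lemma integrable_quadratic_pi_gaussianReal {d : ℕ} (M : Matrix (Fin d) (Fin d) ℝ) :
    Integrable (fun y : Fin d → ℝ => y ⬝ᵥ M *ᵥ y) (Measure.pi fun _ => gaussianReal 0 1) := by
  simp only [dotProduct, mulVec, Finset.mul_sum]
  refine integrable_finsetSum _ fun i _ => integrable_finsetSum _ fun j _ => ?_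
  convert! (integrable_eval_mul_eval_pi_gaussianReal i j).const_mul (M i j) using 2
  ring

open ProbabilityTheory in
lemma integral_quadratic_pi_gaussianReal {d : ℕ} (M : Matrix (Fin d) (Fin d) ℝ) :
    ∫ y : Fin d → ℝ, y ⬝ᵥ M *ᵥ y ∂(Measure.pi fun _ => gaussianReal 0 1) = M.trace := by
  have hentry (i j : Fin d) (y : Fin d → ℝ) : y i * (M i j * y j) = M i j * (y i * y j) := by ring
  simp only [dotProduct, mulVec, Finset.mul_sum, hentry]
  have hint (i j : Fin d) := (integrable_eval_mul_eval_pi_gaussianReal i j).const_mul (M i j)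
  rw [integral_finsetSum _ fun i _ => integrable_finsetSum _ fun j _ => hint i j]
  refine Finset.sum_congr rfl fun i _ => ?_
  rw [integral_finsetSum _ fun j _ => hint i j]
  simp [integral_const_mul, integral_eval_mul_eval_pi_gaussianReal, one_apply]

open ProbabilityTheory in
lemma integrable_dotProduct_pi_gaussianReal {d : ℕ} (v : Fin d → ℝ) :
    Integrable (fun y : Fin d → ℝ => v ⬝ᵥ y) (Measure.pi fun _ => gaussianReal 0 1) :=
  integrable_finsetSum _ fun i _ =>
    (integrable_eval (μ := fun _ : Fin d => gaussianReal 0 1)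
      ((memLp_id_gaussianReal (μ := 0) (v := 1) 1).integrable le_rfl)).const_mul (v i)

open ProbabilityTheory in
lemma integral_dotProduct_pi_gaussianReal {d : ℕ} (v : Fin d → ℝ) :
    ∫ y : Fin d → ℝ, v ⬝ᵥ y ∂(Measure.pi fun _ => gaussianReal 0 1) = 0 := by
  simp only [dotProduct]
  rw [integral_finsetSum _ fun i _ => (integrable_eval (μ := fun _ : Fin d => gaussianReal 0 1)
      ((memLp_id_gaussianReal (μ := 0) (v := 1) 1).integrable le_rfl)).const_mul (v i)]
  refine Finset.sum_eq_zero fun i _ => ?_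
  rw [integral_const_mul, integral_eval (μ := fun _ : Fin d => gaussianReal 0 1)]
  simp

/-- The log-likelihood ratio of a nondegenerate Gaussian with respect to the standard one. -/
lemma log_rnDeriv_multiGaussian_ae {d : ℕ} (m : Fin d → ℝ) {S : Matrix (Fin d) (Fin d) ℝ}
    (hS : 0 < S.det) :
    ∀ᵐ x ∂(multiGaussian m S),
      Real.log ((multiGaussian m S).rnDeriv (multiGaussian 0 1) x).toReal =
        -(1 / 2 : ℝ) * Real.log S.det - (1 / 2 : ℝ) * ((x - m) ⬝ᵥ S⁻¹.mulVec (x - m))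
          + (1 / 2 : ℝ) * (x ⬝ᵥ x) := by
  set r : (Fin d → ℝ) → ℝ := fun x => -(1 / 2 : ℝ) * Real.log S.det -
    (1 / 2 : ℝ) * ((x - m) ⬝ᵥ S⁻¹.mulVec (x - m)) + (1 / 2 : ℝ) * (x ⬝ᵥ x) with hr
  have hrm : Measurable r := by
    have h1 := continuous_sub_dotProduct_mulVec_sub m S⁻¹
    have h2 : Continuous fun x : Fin d → ℝ => x ⬝ᵥ x := continuous_id.dotProduct continuous_id
    have : Continuous r := by fun_prop
    exact this.measurable
  have hgm : Measurable fun x => ENNReal.ofReal (Real.exp (r x)) := by fun_prop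
  have hq : multiGaussian m S =
      (multiGaussian 0 1).withDensity fun x => ENNReal.ofReal (Real.exp (r x)) := by
    rw [multiGaussian, multiGaussian, ← withDensity_mul _ (measurable_multiGaussian_density 0 1) hgm]
    congr 1
    ext x
    rw [Pi.mul_apply, ← ENNReal.ofReal_mul (by positivity)]
    congr 1
    have hpi : (0 : ℝ) ≤ (2 * Real.pi) ^ d := by positivity
    have hlog : (Real.sqrt S.det)⁻¹ = Real.exp (-(1 / 2 : ℝ) * Real.log S.det) := by
      rw [Real.sqrt_eq_rpow, Real.rpow_def_of_pos hS, ← Real.exp_neg]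
      congr 1; ring
    rw [Real.sqrt_mul hpi, mul_inv, hlog, det_one, mul_one, mul_assoc, mul_assoc, ← Real.exp_add,
      ← Real.exp_add]
    congr 2
    simp only [hr, sub_zero, inv_one, one_mulVec]
    ring
  have hsf : SigmaFinite (multiGaussian (0 : Fin d → ℝ) 1) := by
    rw [multiGaussian_zero_one]; infer_instance
  have hac : multiGaussian m S ≪ multiGaussian 0 1 := by
    rw [hq]; exact withDensity_absolutelyContinuous _ _
  have hae := hac.ae_le (Measure.rnDeriv_withDensity (multiGaussian (0 : Fin d → ℝ) 1) hgm)
  filter_upwards [hae] with x hx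
  rw [← hq] at hx
  rw [hx, ENNReal.toReal_ofReal (Real.exp_pos _).le, Real.log_exp]

open scoped MatrixOrder in
open ProbabilityTheory in
/-- The Kullback–Leibler divergence from a Gaussian with precision matrix `A` to the standard
Gaussian. -/
theorem klDiv_multiGaussian_inv {d : ℕ} (m : Fin d → ℝ) {A : Matrix (Fin d) (Fin d) ℝ}
    (hA : A.PosDef) :
    klDiv (multiGaussian m A⁻¹) (multiGaussian 0 1) =
      (1 / 2 : ℝ) * (m ⬝ᵥ m) + (1 / 2 : ℝ) * Real.log A.det
        + (1 / 2 : ℝ) * (A⁻¹.trace - d) := by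
  obtain ⟨R, hRu, hR⟩ :=
    CStarAlgebra.isStrictlyPositive_iff_eq_star_mul_self.mp hA.isStrictlyPositive
  replace hR : A = Rᵀ * R := by simpa [star_eq_conjTranspose] using hR
  have hdet : IsUnit R.det := (isUnit_iff_isUnit_det R).mp hRu
  have hS : 0 < A⁻¹.det := hA.inv.det_pos
  have hT : Continuous fun y : Fin d → ℝ => m + R⁻¹.mulVec y :=
    continuous_const.add (Continuous.matrix_mulVec continuous_const continuous_id)
  rw [klDiv, integral_congr_ae (log_rnDeriv_multiGaussian_ae m hS)]
  rw [nonsing_inv_nonsing_inv _ hA.det_pos.ne'.isUnit]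
  rw [hR, multiGaussian_eq_map m hdet.ne_zero, ← hR, integral_map hT.aemeasurable]
  swap
  · have h1 := continuous_sub_dotProduct_mulVec_sub m A
    have h2 : Continuous fun x : Fin d → ℝ => x ⬝ᵥ x := continuous_id.dotProduct continuous_id
    exact Continuous.aestronglyMeasurable (by fun_prop)
  have hexp (y : Fin d → ℝ) :
      -(1 / 2 : ℝ) * Real.log A⁻¹.det
        - (1 / 2 : ℝ) * ((m + R⁻¹ *ᵥ y - m) ⬝ᵥ A *ᵥ (m + R⁻¹ *ᵥ y - m))
        + (1 / 2 : ℝ) * ((m + R⁻¹ *ᵥ y) ⬝ᵥ (m + R⁻¹ *ᵥ y)) =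
      ((1 / 2 : ℝ) * Real.log A.det + (1 / 2 : ℝ) * (m ⬝ᵥ m)) + (m ᵥ* R⁻¹) ⬝ᵥ y
        + (1 / 2 : ℝ) * (y ⬝ᵥ ((R⁻¹)ᵀ * R⁻¹ - 1) *ᵥ y) := by
    have h1 : (R⁻¹ *ᵥ y) ⬝ᵥ A *ᵥ R⁻¹ *ᵥ y = y ⬝ᵥ y := by
      rw [hR, ← mulVec_mulVec, dotProduct_mulVec, vecMul_transpose, mulVec_mulVec,
        mul_nonsing_inv _ hdet, one_mulVec]
    have h2 : y ⬝ᵥ ((R⁻¹)ᵀ * R⁻¹) *ᵥ y = (R⁻¹ *ᵥ y) ⬝ᵥ (R⁻¹ *ᵥ y) := by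
      rw [← mulVec_mulVec, dotProduct_mulVec, vecMul_transpose]
    have h3 : (m ᵥ* R⁻¹) ⬝ᵥ y = m ⬝ᵥ (R⁻¹ *ᵥ y) := (dotProduct_mulVec _ _ _).symm
    rw [add_sub_cancel_left, h1, sub_mulVec, dotProduct_sub, h2, h3, one_mulVec, det_nonsing_inv,
      Ring.inverse_eq_inv', Real.log_inv, add_dotProduct, dotProduct_add, dotProduct_add,
      dotProduct_comm (R⁻¹ *ᵥ y) m]
    ring
  have htrace : ((R⁻¹)ᵀ * R⁻¹ - 1).trace = A⁻¹.trace - d := by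
    rw [trace_sub, trace_one, Fintype.card_fin, trace_mul_comm, hR, Matrix.mul_inv_rev,
      transpose_nonsing_inv]
  simp only [hexp]
  rw [integral_add (f := fun y => (1 / 2 : ℝ) * Real.log A.det + (1 / 2 : ℝ) * (m ⬝ᵥ m)
        + (m ᵥ* R⁻¹) ⬝ᵥ y)
      ((integrable_const _).add (integrable_dotProduct_pi_gaussianReal _))
      ((integrable_quadratic_pi_gaussianReal _).const_mul _),
    integral_add (integrable_const _) (integrable_dotProduct_pi_gaussianReal _),
    integral_const_mul, integral_quadratic_pi_gaussianReal, integral_dotProduct_pi_gaussianReal,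
    htrace]
  simp
  ring

/-- closed form of the KL divergence between the decoupled
variational posterior `q = N(Ψα a, (I + Ψβ B Ψβᵀ)⁻¹)` and the normal prior
`p = N(0, I)`, where `K_α = Ψαᵀ Ψα` and `K_β = Ψβᵀ Ψβ`. -/
theorem stmt_2 (d Mα Mβ : ℕ) (hd : 1 ≤ d) (hMα : 1 ≤ Mα) (hMβ : 1 ≤ Mβ)
    (Ψα : Matrix (Fin d) (Fin Mα) ℝ) (Ψβ : Matrix (Fin d) (Fin Mβ) ℝ)
    (a : Fin Mα → ℝ) (B : Matrix (Fin Mβ) (Fin Mβ) ℝ) (hB : B.PosDef) :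
    klDiv (multiGaussian (Ψα.mulVec a) ((1 + Ψβ * B * Ψβᵀ)⁻¹))
        (multiGaussian 0 1) =
      (1 / 2 : ℝ) * (a ⬝ᵥ (Ψαᵀ * Ψα).mulVec a)
        + (1 / 2 : ℝ) * Real.log (1 + (Ψβᵀ * Ψβ) * B).det
        - (1 / 2 : ℝ) * ((Ψβᵀ * Ψβ) * (B⁻¹ + Ψβᵀ * Ψβ)⁻¹).trace := by
  have hA : (1 + Ψβ * B * Ψβᵀ).PosDef := by
    refine PosDef.one.add_posSemidef ?_
    simpa using hB.posSemidef.mul_mul_conjTranspose_same Ψβ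
  have hC : (B⁻¹ + Ψβᵀ * Ψβ).PosDef := by
    refine hB.inv.add_posSemidef ?_
    simpa using posSemidef_conjTranspose_mul_self Ψβ
  have hmean : Ψα *ᵥ a ⬝ᵥ Ψα *ᵥ a = a ⬝ᵥ (Ψαᵀ * Ψα) *ᵥ a := by
    rw [← mulVec_mulVec, dotProduct_mulVec a, vecMul_transpose]
  have hdet : (1 + Ψβ * B * Ψβᵀ).det = (1 + (Ψβᵀ * Ψβ) * B).det := by
    rw [det_one_add_mul_comm, Matrix.mul_assoc]
  have hinv : (1 + Ψβ * B * Ψβᵀ)⁻¹ = 1 - Ψβ * (B⁻¹ + Ψβᵀ * Ψβ)⁻¹ * Ψβᵀ := by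
    simpa using add_mul_mul_inv_eq_sub (1 : Matrix (Fin d) (Fin d) ℝ) Ψβ B Ψβᵀ isUnit_one
      hB.isUnit (by simpa using hC.isUnit)
  have htrace : ((1 + Ψβ * B * Ψβᵀ)⁻¹).trace =
      d - ((Ψβᵀ * Ψβ) * (B⁻¹ + Ψβᵀ * Ψβ)⁻¹).trace := by
    rw [hinv, trace_sub, trace_one, Fintype.card_fin, trace_mul_comm, ← Matrix.mul_assoc]
  rw [klDiv_multiGaussian_inv _ hA, hmean, hdet, htrace]
  ring
end
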